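/- Let 𝔭 be a prime ideal of 𝒪, 𝔡 the different of K, 𝔣 an ideal of 𝒪 which is a power of 𝔭, and ℒ an integral ideal with ord_𝔭(𝔣) ≤ ord_𝔭(ℒ). Let a, d ∈ 𝒪_𝔭 with a𝒪_𝔭 and d𝒪_𝔭 coprime to 𝔭𝒪_𝔭, and let c̃ℒ̃𝔡̃ ∈ ℒ𝔡𝒪_𝔭 be the lower-left entry of a matrix in W_𝔭(ℒ). Suppose r₀, r₁ ∈ 𝔣⁻¹𝔡⁻¹ and r⁰, r¹ ∈ 𝔣⁻¹𝔡⁻¹ satisfy: (i) ord_𝔮(rⁱ) ≥ 0 for all primes 𝔮 with ord_𝔮(𝔣𝔡) = 0; (ii) ord_𝔮(rⁱ) ≥ −ord_𝔮(𝔡) for all primes 𝔮 ≠ 𝔭 dividing 𝔡; (iii) a·rᵢ − rⁱ·(d − c̃ℒ̃𝔭𝔡̃𝔭·rᵢ) ∈ 𝔡⁻¹𝒪_𝔭 for i = 0, 1. If r⁰ − r¹ ∈ 𝔡⁻¹, then r₀ − r₁ ∈ 𝔡⁻¹; i.e., the element r′ attached to r is uniquely determined in 𝔣⁻¹𝔡⁻¹/𝔡⁻¹.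 -/

import Mathlib

open NumberField IsDedekindDomain
open scoped nonZeroDivisors

lemma rprime_aux_local {F Γ : Type*} [Field F] [LinearOrderedCommGroupWithZero Γ]
    (V : Valuation F Γ) (a d c x y X Y δ p : F)
    (ha : V a = 1) (hd : V d = 1) (hp : V p < 1) (hc : V c ≤ V (δ * p))
    (hx : V (x * (δ * p)) ≤ 1) (hy : V (y * (δ * p)) ≤ 1) (hX : V (X * (δ * p)) ≤ 1)
    (hXY : V ((X - Y) * δ) ≤ 1)
    (h0 : V ((a * x - X * (d - c * x)) * δ) ≤ 1)
    (h1 : V ((a * y - Y * (d - c * y)) * δ) ≤ 1) : V ((x - y) * δ) ≤ 1 := by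
  have hcX : V (c * X) ≤ V (X * (δ * p)) := by
    rw [map_mul, map_mul V X, mul_comm]
    gcongr
  have hcy : V (c * y) ≤ 1 := by
    refine le_trans ?_ hy
    rw [map_mul, map_mul V y, mul_comm]
    gcongr
  have hu : V (a + c * X) = 1 := by
    refine le_antisymm (V.map_add_le ha.le (hcX.trans hX)) ?_
    by_contra hlt
    push Not at hlt
    have e1 : V (c * X) = 1 := by
      have : c * X = (a + c * X) - a := by ring
      rw [this, Valuation.map_sub_eq_of_lt_right V (by rw [ha]; exact hlt), ha]
    have e2 : V (X * (δ * p)) < 1 := by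
      have e3 : V (X * (δ * p)) = V (X * (δ * p) * d) := by rw [map_mul V _ d, hd, mul_one]
      have e4 : X * (δ * p) * d = (a + c * X) * (x * (δ * p))
          - ((a * x - X * (d - c * x)) * δ) * p := by ring
      rw [e3, e4]
      refine V.map_sub_lt ?_ ?_
      · rw [map_mul]; exact (mul_le_of_le_one_right' hx).trans_lt hlt
      · rw [map_mul]; exact (mul_le_of_le_one_left' h0).trans_lt hp
    exact absurd (e1 ▸ hcX) (not_le.mpr e2)
  have e5 : V ((x - y) * δ) = V ((a + c * X) * ((x - y) * δ)) := by
    rw [map_mul V (a + c * X), hu, one_mul]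
  have e6 : (a + c * X) * ((x - y) * δ) = ((a * x - X * (d - c * x)) * δ
      - (a * y - Y * (d - c * y)) * δ) + (d * ((X - Y) * δ) - c * y * ((X - Y) * δ)) := by ring
  rw [e5, e6]
  refine V.map_add_le (V.map_sub_le h0 h1) (V.map_sub_le ?_ ?_)
  · rw [map_mul, hd, one_mul]; exact hXY
  · rw [map_mul]; exact mul_le_one' hcy hXY

lemma rprime_aux_gen {R : Type*} [CommRing R] [IsDedekindDomain R]
    (v : HeightOneSpectrum R) (D : Ideal R) (hD : D ≠ ⊥) :
    ∃ y0 ∈ D, y0 ≠ 0 ∧ ∀ y ∈ D, v.intValuation y ≤ v.intValuation y0 := by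
  classical
  have key : ∀ y : R, y ≠ 0 → ∃ n : ℕ, v.intValuation y = WithZero.exp (-(n : ℤ)) := fun y hy =>
    ⟨_, v.intValuation_if_neg hy⟩
  obtain ⟨z, hz, hz0⟩ := Submodule.exists_mem_ne_zero_of_ne_bot hD
  have hex : ∃ n : ℕ, ∃ y ∈ D, y ≠ 0 ∧ v.intValuation y = WithZero.exp (-(n : ℤ)) := by
    obtain ⟨n, hn⟩ := key z hz0
    exact ⟨n, z, hz, hz0, hn⟩
  obtain ⟨y0, hy0, hne, hv⟩ := Nat.find_spec hex
  refine ⟨y0, hy0, hne, fun y hy => ?_⟩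
  by_cases h0 : y = 0
  · simp [h0]
  obtain ⟨m, hm⟩ := key y h0
  have := Nat.find_min' hex ⟨y, hy, h0, hm⟩
  rw [hv, hm, WithZero.exp_le_exp]
  omega

lemma rprime_aux_mem_inv {R K : Type*} [CommRing R] [IsDedekindDomain R] [Field K] [Algebra R K]
    [IsFractionRing R K] (D : Ideal R) (hD : D ≠ ⊥) (x : K) :
    x ∈ ((D : FractionalIdeal R⁰ K))⁻¹ ↔
      ∀ y ∈ D, ∀ w : HeightOneSpectrum R, w.valuation K (x * algebraMap R K y) ≤ 1 := by
  rw [FractionalIdeal.mem_inv_iff (by simpa using hD)]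
  constructor
  · intro h y hy w
    obtain ⟨z, hz⟩ := (FractionalIdeal.mem_one_iff R⁰).mp
      (h _ (FractionalIdeal.mem_coeIdeal_of_mem R⁰ hy))
    rw [← hz]
    exact w.valuation_le_one z
  · intro h y hy
    obtain ⟨z, hz, rfl⟩ := (FractionalIdeal.mem_coeIdeal R⁰).mp hy
    obtain ⟨t, ht⟩ := HeightOneSpectrum.mem_integers_of_valuation_le_one K _ (h z hz)
    exact (FractionalIdeal.mem_one_iff R⁰).mpr ⟨t, ht⟩

/-- uniqueness of the approximating element `r′` in the proof of the
level-bound proposition.  Let `𝔭` be a (nonzero) prime of `𝒪` (a point `v` of the height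
one spectrum), `𝔡` the different of `K`, `𝔣 = 𝔭^e` a power of `𝔭`, and `ℒ` an integral
ideal with `ord_𝔭 𝔣 ≤ ord_𝔭 ℒ` (equivalently `𝔭^e ∣ ℒ`).  Let `a, d` be elements of the
completion `𝒪_𝔭` whose associated ideals are coprime to `𝔭𝒪_𝔭` (i.e. of valuation `1`),
and let `c` be an element of `ℒ𝔡𝒪_𝔭` (the lower-left entry of a matrix of `W_𝔭(ℒ)`).
Suppose `r₀, r₁ ∈ 𝔣⁻¹𝔡⁻¹` and `r⁰, r¹ ∈ 𝔣⁻¹𝔡⁻¹` satisfy: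
(i)  `ord_𝔮(rⁱ) ≥ 0` for all primes `𝔮` with `ord_𝔮(𝔣𝔡) = 0`;
(ii) `rⁱ ∈ 𝔡⁻¹𝒪_𝔮` for all primes `𝔮 ≠ 𝔭` dividing `𝔡`;
(iii) `a·rᵢ − rⁱ·(d − c·rᵢ) ∈ 𝔡⁻¹𝒪_𝔭` for `i = 0, 1`.
If `r⁰ − r¹ ∈ 𝔡⁻¹` then `r₀ − r₁ ∈ 𝔡⁻¹`; i.e. the element `r′` attached to `r` is
uniquely determined in `𝔣⁻¹𝔡⁻¹/𝔡⁻¹`. -/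
theorem rprime_unique_mod_inv_different
    (K : Type*) [Field K] [NumberField K]
    (v : HeightOneSpectrum (𝓞 K))
    (D : Ideal (𝓞 K)) (hD : D = differentIdeal ℤ (𝓞 K))
    (e : ℕ) (L : Ideal (𝓞 K)) (hL : v.asIdeal ^ e ∣ L)
    (a d c : v.adicCompletion K)
    (ha : Valued.v a = (1 : WithZero (Multiplicative ℤ)))
    (hd : Valued.v d = (1 : WithZero (Multiplicative ℤ)))
    (hc : ∃ t : 𝓞 K, t ∈ L * D ∧
      Valued.v c ≤ Valued.v ((algebraMap (𝓞 K) K t : K) : v.adicCompletion K))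
    (r0 r1 R0 R1 : K)
    (hr0 : r0 ∈ (((v.asIdeal ^ e * D : Ideal (𝓞 K)) : FractionalIdeal (𝓞 K)⁰ K))⁻¹)
    (hr1 : r1 ∈ (((v.asIdeal ^ e * D : Ideal (𝓞 K)) : FractionalIdeal (𝓞 K)⁰ K))⁻¹)
    (hR0 : R0 ∈ (((v.asIdeal ^ e * D : Ideal (𝓞 K)) : FractionalIdeal (𝓞 K)⁰ K))⁻¹)
    (hR1 : R1 ∈ (((v.asIdeal ^ e * D : Ideal (𝓞 K)) : FractionalIdeal (𝓞 K)⁰ K))⁻¹)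
    -- condition (i) for r⁰ and r¹
    (hi0 : ∀ w : HeightOneSpectrum (𝓞 K), ¬ w.asIdeal ∣ v.asIdeal ^ e * D →
      w.valuation K R0 ≤ 1)
    (hi1 : ∀ w : HeightOneSpectrum (𝓞 K), ¬ w.asIdeal ∣ v.asIdeal ^ e * D →
      w.valuation K R1 ≤ 1)
    -- condition (ii) for r⁰ and r¹
    (hii0 : ∀ w : HeightOneSpectrum (𝓞 K), w ≠ v → w.asIdeal ∣ D →
      ∀ y : 𝓞 K, y ∈ D → w.valuation K (R0 * (algebraMap (𝓞 K) K y)) ≤ 1)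
    (hii1 : ∀ w : HeightOneSpectrum (𝓞 K), w ≠ v → w.asIdeal ∣ D →
      ∀ y : 𝓞 K, y ∈ D → w.valuation K (R1 * (algebraMap (𝓞 K) K y)) ≤ 1)
    -- condition (iii) for the pairs (r₀, r⁰) and (r₁, r¹)
    (hiii0 : ∀ y : 𝓞 K, y ∈ D →
      Valued.v ((a * (r0 : v.adicCompletion K)
          - (R0 : v.adicCompletion K) * (d - c * (r0 : v.adicCompletion K)))
        * ((algebraMap (𝓞 K) K y : K) : v.adicCompletion K)) ≤ 1)
    (hiii1 : ∀ y : 𝓞 K, y ∈ D →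
      Valued.v ((a * (r1 : v.adicCompletion K)
          - (R1 : v.adicCompletion K) * (d - c * (r1 : v.adicCompletion K)))
        * ((algebraMap (𝓞 K) K y : K) : v.adicCompletion K)) ≤ 1)
    (h : R0 - R1 ∈ ((D : FractionalIdeal (𝓞 K)⁰ K))⁻¹) :
    r0 - r1 ∈ ((D : FractionalIdeal (𝓞 K)⁰ K))⁻¹ := by
  have hD0 : D ≠ ⊥ := by
    rw [hD]; exact differentIdeal_ne_bot
  have hvD0 : v.asIdeal ^ e * D ≠ ⊥ := mul_ne_zero (pow_ne_zero _ v.ne_bot) hD0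
  rw [rprime_aux_mem_inv _ hvD0] at hr0 hr1 hR0
  rw [rprime_aux_mem_inv _ hD0] at h ⊢
  intro y hy w
  by_cases hw : w = v
  · subst hw
    rcases Nat.eq_zero_or_pos e with rfl | he
    · rw [pow_zero, one_mul] at hr0 hr1
      rw [sub_mul]
      exact (w.valuation K).map_sub_le (hr0 y hy w) (hr1 y hy w)
    obtain ⟨y0, hy0, -, hmax⟩ := rprime_aux_gen w D hD0
    obtain ⟨π, hπ⟩ := w.intValuation_exists_uniformizer
    have hπmem : π ^ e ∈ w.asIdeal ^ e := by
      refine Ideal.pow_mem_pow ?_ e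
      rw [← w.intValuation_lt_one_iff_mem, hπ, ← WithZero.exp_zero, WithZero.exp_lt_exp]
      norm_num
    have hmem : y0 * π ^ e ∈ w.asIdeal ^ e * D := by
      rw [mul_comm y0]; exact Ideal.mul_mem_mul hπmem hy0
    have hle : ∀ t ∈ w.asIdeal ^ e * D, w.intValuation t ≤ w.intValuation (y0 * π ^ e) := by
      intro t ht
      refine Submodule.mul_induction_on ht ?_ ?_
      · intro m hm n hn
        rw [map_mul, map_mul, mul_comm]
        refine mul_le_mul' (hmax n hn) ?_
        rw [map_pow, hπ, ← WithZero.exp_nsmul]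
        have := (w.intValuation_le_pow_iff_mem m e).mpr hm
        simpa using this
      · intro s t hs ht
        exact w.intValuation.map_add_le hs ht
    have hco : ∀ z : K, Valued.v (z : w.adicCompletion K) = w.valuation K z :=
      fun z => w.valuedAdicCompletion_eq_valuation' z
    have hmul : ∀ z z' : K, ((z * z' : K) : w.adicCompletion K) = (z : w.adicCompletion K) * z' :=
      fun z z' => map_mul (algebraMap K (w.adicCompletion K)) z z'
    have hsub : ∀ z z' : K, ((z - z' : K) : w.adicCompletion K) = (z : w.adicCompletion K) - z' :=
      fun z z' => map_sub (algebraMap K (w.adicCompletion K)) z z'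
    obtain ⟨t, ht, hct⟩ := hc
    have hmain := rprime_aux_local (Valued.v : Valuation (w.adicCompletion K) _) a d c
      (r0 : w.adicCompletion K) (r1 : w.adicCompletion K) (R0 : w.adicCompletion K)
      (R1 : w.adicCompletion K) ((algebraMap (𝓞 K) K y0 : K) : w.adicCompletion K)
      ((algebraMap (𝓞 K) K (π ^ e) : K) : w.adicCompletion K) ha hd ?_ ?_ ?_ ?_ ?_ ?_
      (hiii0 y0 hy0) (hiii1 y0 hy0)
    · rw [← hsub, ← hmul, hco] at hmain
      refine le_trans ?_ hmain
      rw [map_mul, map_mul]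
      gcongr
      rw [w.valuation_of_algebraMap, w.valuation_of_algebraMap]
      exact hmax y hy
    · rw [hco, w.valuation_of_algebraMap, map_pow, hπ, ← WithZero.exp_nsmul, ← WithZero.exp_zero,
        WithZero.exp_lt_exp]
      simpa using he
    · refine hct.trans ?_
      rw [← hmul, hco, hco, ← map_mul, w.valuation_of_algebraMap, w.valuation_of_algebraMap]
      refine hle t (Ideal.mul_mono_left (Ideal.le_of_dvd hL) ht)
    · have := hr0 _ hmem w
      rw [← hco, map_mul (algebraMap (𝓞 K) K), hmul, hmul] at this
      exact this
    · have := hr1 _ hmem w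
      rw [← hco, map_mul (algebraMap (𝓞 K) K), hmul, hmul] at this
      exact this
    · have := hR0 _ hmem w
      rw [← hco, map_mul (algebraMap (𝓞 K) K), hmul, hmul] at this
      exact this
    · have := h _ hy0 w
      rw [← hco, hmul, hsub] at this
      exact this
  · have hnle : ¬ v.asIdeal ≤ w.asIdeal := fun hle =>
      hw (HeightOneSpectrum.ext ((v.isMaximal.eq_of_le w.isPrime.ne_top hle).symm))
    obtain ⟨s, hs, hsw⟩ := SetLike.not_le_iff_exists.mp hnle
    have hs1 : w.valuation K (algebraMap (𝓞 K) K (s ^ e)) = 1 := by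
      rw [w.valuation_of_algebraMap, map_pow]
      have : w.intValuation s = 1 := le_antisymm (w.intValuation_le_one s)
        (not_lt.mp fun hlt => hsw ((w.intValuation_lt_one_iff_mem s).mp hlt))
      rw [this, one_pow]
    have hmem : s ^ e * y ∈ v.asIdeal ^ e * D :=
      Ideal.mul_mem_mul (Ideal.pow_mem_pow hs e) hy
    have key : ∀ r : K, w.valuation K (r * algebraMap (𝓞 K) K (s ^ e * y)) ≤ 1 →
        w.valuation K (r * algebraMap (𝓞 K) K y) ≤ 1 := by
      intro r hr
      rw [map_mul (algebraMap (𝓞 K) K), mul_left_comm, map_mul, hs1, one_mul] at hr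
      exact hr
    rw [sub_mul]
    exact (w.valuation K).map_sub_le (key _ (hr0 _ hmem w)) (key _ (hr1 _ hmem w))
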